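/- arXiv:1808.01670 — 2 statements merged into one kernel-verified Lean document; each statement's English description precedes it below -/
import Mathlib

section
/- (Self-adjointness law) In a lattice effect algebra E, for all a,b,c ∈ E: if a⊗b ≤ c' then a⊗c ≤ b'. -/
/-- A lattice effect algebra: an effect algebra (partial operation encoded by a
definedness predicate `D` and a total function `add` whose value is only
meaningful on `D`) whose induced order `a ≤ b ↔ ∃ c, a⊕c = b` is a lattice;
the carrier's lattice order is required to coincide with the induced order. -/
structure LatticeEffectAlgebra (E : Type*) [Lattice E] [BoundedOrder E] where
  D : E → E → Prop
  add : E → E → E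
  comm : ∀ a b : E, D a b → (D b a ∧ add a b = add b a)
  assoc : ∀ a b c : E, D b c → D a (add b c) →
    (D a b ∧ D (add a b) c ∧ add a (add b c) = add (add a b) c)
  inv : E → E
  D_inv : ∀ a : E, D a (inv a)
  add_inv : ∀ a : E, add a (inv a) = ⊤
  inv_unique : ∀ a b : E, D a b → add a b = ⊤ → b = inv a
  D_top : ∀ a : E, D a ⊤ → a = ⊥
  le_iff : ∀ a b : E, a ≤ b ↔ ∃ c, D a c ∧ add a c = b

variable {E : Type*} [Lattice E] [BoundedOrder E]

/-- Sasaki product: a⊗b = (a'⊕(a∧b'))'. -/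
def LatticeEffectAlgebra.sprod (A : LatticeEffectAlgebra E) (a b : E) : E :=
  A.inv (A.add (A.inv a) (a ⊓ A.inv b))

/-- Sasaki arrow: a→ₛb = a'⊕(a∧b). -/
def LatticeEffectAlgebra.sarrow (A : LatticeEffectAlgebra E) (a b : E) : E :=
  A.add (A.inv a) (a ⊓ b)

/-!
Since `a' ⊕ (a ∧ b')` is the orthosupplement of the difference `a ⊖ (a ∧ b')`, the Sasaki product
is `a ⊗ b = a ⊖ (a ∧ b')`. The map `x ↦ a ⊖ x` is an antitone involution of the interval `[0, a]`.
The hypothesis says `a ⊗ b ≤ a ∧ c'`, and this map turns it into `a ⊗ c ≤ a ∧ b'`, which is below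
the required bound.
-/

namespace LatticeEffectAlgebra

/-- The difference `b ⊖ a = (b' ⊕ a)'`, the unique `c` with `a ⊕ c = b`. It is total because
`add` is, but only meaningful for `a ≤ b`. -/
def sub (A : LatticeEffectAlgebra E) (b a : E) : E :=
  A.inv (A.add (A.inv b) a)

variable (A : LatticeEffectAlgebra E) {a b c : E}

theorem D_symm (h : A.D a b) : A.D b a :=
  (A.comm a b h).1

theorem add_comm_of_D (h : A.D a b) : A.add a b = A.add b a :=
  (A.comm a b h).2

theorem le_add_right (h : A.D a b) : a ≤ A.add a b :=
  (A.le_iff a (A.add a b)).2 ⟨b, h, rfl⟩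

theorem inv_add (a : E) : A.add (A.inv a) a = ⊤ :=
  (A.add_comm_of_D (A.D_inv a)).symm.trans (A.add_inv a)

theorem eq_sub_of_add_eq (hD : A.D a c) (h : A.add a c = b) : c = A.sub b a := by
  subst h
  obtain ⟨-, hD', hassoc⟩ := A.assoc _ a c hD (A.D_symm (A.D_inv (A.add a c)))
  exact A.inv_unique _ c hD' (hassoc.symm.trans (A.inv_add (A.add a c)))

theorem D_sub (h : a ≤ b) : A.D a (A.sub b a) := by
  obtain ⟨c, hD, hadd⟩ := (A.le_iff a b).1 h
  exact A.eq_sub_of_add_eq hD hadd ▸ hD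

theorem add_sub_of_le (h : a ≤ b) : A.add a (A.sub b a) = b := by
  obtain ⟨c, hD, hadd⟩ := (A.le_iff a b).1 h
  exact A.eq_sub_of_add_eq hD hadd ▸ hadd

theorem sub_add_of_le (h : a ≤ b) : A.add (A.sub b a) a = b :=
  (A.add_comm_of_D (A.D_sub h)).symm.trans (A.add_sub_of_le h)

theorem sub_le_self (h : a ≤ b) : A.sub b a ≤ b :=
  (A.le_add_right (A.D_symm (A.D_sub h))).trans_eq (A.sub_add_of_le h)

theorem sub_sub_self (h : a ≤ b) : A.sub b (A.sub b a) = a :=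
  (A.eq_sub_of_add_eq (A.D_symm (A.D_sub h)) (A.sub_add_of_le h)).symm

theorem sub_le_sub_left (hab : a ≤ b) (hbc : b ≤ c) : A.sub c b ≤ A.sub c a := by
  have hb : A.add (A.sub b a) a = b := A.sub_add_of_le hab
  have hDc : A.D (A.sub c b) (A.add (A.sub b a) a) := hb.symm ▸ A.D_symm (A.D_sub hbc)
  obtain ⟨hD, hDa, hassoc⟩ := A.assoc _ _ _ (A.D_symm (A.D_sub hab)) hDc
  have hsum : A.add a (A.add (A.sub c b) (A.sub b a)) = c := by
    rw [← A.add_comm_of_D hDa, ← hassoc, hb, A.sub_add_of_le hbc]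
  calc A.sub c b ≤ A.add (A.sub c b) (A.sub b a) := A.le_add_right hD
    _ = A.sub c a := A.eq_sub_of_add_eq (A.D_symm hDa) hsum

theorem sprod_eq_sub (a b : E) : A.sprod a b = A.sub a (a ⊓ A.inv b) :=
  rfl

theorem sprod_le_left (a b : E) : A.sprod a b ≤ a :=
  A.sub_le_self inf_le_left

end LatticeEffectAlgebra

/-- (Self-adjointness law) In a lattice effect algebra, if a⊗b ≤ c' then
a⊗c ≤ b'. -/
theorem self_adjointness (A : LatticeEffectAlgebra E) (a b c : E)
    (h : A.sprod a b ≤ A.inv c) : A.sprod a c ≤ A.inv b := by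
  have h_le_inf : A.sprod a b ≤ a ⊓ A.inv c := le_inf (A.sprod_le_left a b) h
  calc A.sprod a c = A.sub a (a ⊓ A.inv c) := A.sprod_eq_sub a c
    _ ≤ A.sub a (A.sprod a b) := A.sub_le_sub_left h_le_inf inf_le_left
    _ = A.sub a (A.sub a (a ⊓ A.inv b)) := by rw [A.sprod_eq_sub]
    _ = a ⊓ A.inv b := A.sub_sub_self inf_le_left
    _ ≤ A.inv b := inf_le_right
end

section
/- In a lattice effect algebra E, for all a,b ∈ E: a∧b = a⊗(a→ₛb) = b⊗(b→ₛa) = (a→ₛ(a→ₛb)')' = (b→ₛ(b→ₛa)')'. -/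
variable {E : Type*} [Lattice E] [BoundedOrder E]

namespace LatticeEffectAlgebra

/-- The difference `a ⊖ c = (a' ⊕ c)'` of an effect algebra, which recovers `d` from `a = c ⊕ d`.
It is encoded as a total function whose value is only meaningful for `c ≤ a`. -/
def diff (A : LatticeEffectAlgebra E) (a c : E) : E :=
  A.inv (A.add (A.inv a) c)

theorem diff_add_left (A : LatticeEffectAlgebra E) {c d : E} (hcd : A.D c d) :
    A.diff (A.add c d) c = d := by
  obtain ⟨h_inv, h_comm⟩ := A.comm _ _ (A.D_inv (A.add c d))
  obtain ⟨-, h_def, h_assoc⟩ := A.assoc _ _ _ hcd h_inv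
  have h_top : A.add (A.add (A.inv (A.add c d)) c) d = ⊤ := by
    rw [← h_assoc, ← h_comm, A.add_inv]
  exact (A.inv_unique _ _ h_def h_top).symm

theorem diff_add_right (A : LatticeEffectAlgebra E) {c d : E} (hcd : A.D c d) :
    A.diff (A.add c d) d = c := by
  obtain ⟨hdc, h_comm⟩ := A.comm _ _ hcd
  rw [h_comm, A.diff_add_left hdc]

theorem diff_le (A : LatticeEffectAlgebra E) {a c : E} (hca : c ≤ a) : A.diff a c ≤ a := by
  obtain ⟨d, hcd, rfl⟩ := (A.le_iff _ _).1 hca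
  obtain ⟨hdc, h_comm⟩ := A.comm _ _ hcd
  rw [A.diff_add_left hcd]
  exact (A.le_iff _ _).2 ⟨c, hdc, h_comm.symm⟩

theorem diff_diff_cancel (A : LatticeEffectAlgebra E) {a c : E} (hca : c ≤ a) :
    A.diff a (A.diff a c) = c := by
  obtain ⟨d, hcd, rfl⟩ := (A.le_iff _ _).1 hca
  rw [A.diff_add_left hcd, A.diff_add_right hcd]

theorem inv_sarrow (A : LatticeEffectAlgebra E) (a b : E) :
    A.inv (A.sarrow a b) = A.diff a (a ⊓ b) :=
  rfl

theorem sprod_eq_inv_sarrow_inv (A : LatticeEffectAlgebra E) (a b : E) :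
    A.sprod a b = A.inv (A.sarrow a (A.inv b)) :=
  rfl

theorem inv_sarrow_inv_sarrow (A : LatticeEffectAlgebra E) (a b : E) :
    A.inv (A.sarrow a (A.inv (A.sarrow a b))) = a ⊓ b :=
  calc
    A.inv (A.sarrow a (A.inv (A.sarrow a b))) = A.diff a (a ⊓ A.diff a (a ⊓ b)) := by
      rw [A.inv_sarrow, A.inv_sarrow]
    _ = A.diff a (A.diff a (a ⊓ b)) := by rw [inf_eq_right.2 (A.diff_le inf_le_left)]
    _ = a ⊓ b := A.diff_diff_cancel inf_le_left

theorem sprod_sarrow (A : LatticeEffectAlgebra E) (a b : E) :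
    A.sprod a (A.sarrow a b) = a ⊓ b := by
  rw [A.sprod_eq_inv_sarrow_inv, A.inv_sarrow_inv_sarrow]

end LatticeEffectAlgebra

/-- In a lattice effect algebra,
a∧b = a⊗(a→ₛb) = b⊗(b→ₛa) = (a→ₛ(a→ₛb)')' = (b→ₛ(b→ₛa)')'. -/
theorem inf_eq_sasaki (A : LatticeEffectAlgebra E) (a b : E) :
    a ⊓ b = A.sprod a (A.sarrow a b) ∧
    a ⊓ b = A.sprod b (A.sarrow b a) ∧
    a ⊓ b = A.inv (A.sarrow a (A.inv (A.sarrow a b))) ∧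
    a ⊓ b = A.inv (A.sarrow b (A.inv (A.sarrow b a))) := by
  refine ⟨?_, ?_, ?_, ?_⟩
  · rw [A.sprod_sarrow]
  · rw [A.sprod_sarrow, inf_comm]
  · rw [A.inv_sarrow_inv_sarrow]
  · rw [A.inv_sarrow_inv_sarrow, inf_comm]
end
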